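/- Let f be an orientation-preserving C^1 circle diffeomorphism and let ν be a Borel probability measure on the circle that is 1-automorphic for f, i.e., ∫ φ dν = ∫ (φ ∘ f)·Df dν for every continuous function φ. Then the linear functional L(u) := ∫ u′ dν, defined on C^1 real-valued functions u on the circle, is an f-invariant 1-distribution: L is continuous in the C^1 topology and L(u ∘ f) = L(u) for every C^1 function u. -/

import Mathlib

/-! The functional is `u ↦ ∫ u' dν`. For `C¹` functions the derivative is continuous on the
compact circle, hence integrable, which gives linearity and the bound `|L u| ≤ sup |u'|` because
`ν` has mass one. Invariance is the chain rule `(u ∘ f)' = (u' ∘ f) · Df` combined with the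
automorphy of `ν`, applied to `φ = u'`, which is continuous. -/

open MeasureTheory Function Filter Set
open scoped Topology

noncomputable section

/-- The circle `ℝ/ℤ`. -/
abbrev 𝕊 : Type := UnitAddCircle

/-- An orientation-preserving `C¹` diffeomorphism of the circle `ℝ/ℤ`, described by a lift
`F : ℝ → ℝ` (a `C¹` map commuting with the unit translation, with everywhere positive
derivative, admitting a `C¹` inverse). -/
structure C1Diffeo : Type where
  F : ℝ → ℝ
  Finv : ℝ → ℝ
  contDiff : ContDiff ℝ 1 F
  contDiff_inv : ContDiff ℝ 1 Finv
  deriv_pos : ∀ x, 0 < deriv F x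
  map_add_one : ∀ x, F (x + 1) = F x + 1
  left_inv : Function.LeftInverse Finv F
  right_inv : Function.RightInverse Finv F

/-- If a map `ℝ → ℝ` commutes with the unit translation, so do its iterates. -/
lemma iterate_map_add_one {G : ℝ → ℝ} (h : ∀ x, G (x + 1) = G x + 1) (n : ℕ) (x : ℝ) :
    G^[n] (x + 1) = G^[n] x + 1 := by
  induction n with
  | zero => simp
  | succ n ih => rw [Function.iterate_succ_apply', Function.iterate_succ_apply', ih, h]

/-- The derivative of a periodic function is periodic. -/
lemma Function.Periodic.deriv' {G : ℝ → ℝ} (h : Function.Periodic G 1) :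
    Function.Periodic (deriv G) 1 := by
  intro x
  have h2 : (fun y => G (y + 1)) = G := funext h
  have h3 := congrArg (fun k : ℝ → ℝ => deriv k x) h2
  simpa [deriv_comp_add_const] using h3

/-- The derivative of a map commuting with the unit translation is periodic. -/
lemma periodic_deriv_of_shift {G : ℝ → ℝ} (h : ∀ x, G (x + 1) = G x + 1) :
    Function.Periodic (deriv G) 1 := by
  intro x
  have h2 : (fun y => G (y + 1)) = fun y => G y + 1 := funext h
  have h3 := congrArg (fun k : ℝ → ℝ => deriv k x) h2
  simpa [deriv_comp_add_const, deriv_add_const] using h3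

namespace C1Diffeo

variable (f : C1Diffeo)

lemma inv_map_add_one : ∀ x, f.Finv (x + 1) = f.Finv x + 1 := fun x => by
  conv_lhs => rw [← f.right_inv x]
  rw [← f.map_add_one, f.left_inv]

/-- Lift of the `n`-th iterate of `f`, `n : ℤ`. -/
def iterZ : ℤ → ℝ → ℝ
  | Int.ofNat n => f.F^[n]
  | Int.negSucc n => f.Finv^[n + 1]

lemma iterZ_map_add_one (n : ℤ) (x : ℝ) : f.iterZ n (x + 1) = f.iterZ n x + 1 := by
  cases n with
  | ofNat n => exact iterate_map_add_one f.map_add_one n x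
  | negSucc n => exact iterate_map_add_one f.inv_map_add_one (n + 1) x

/-- The induced self-map of the circle. -/
def toCircle : 𝕊 → 𝕊 :=
  Function.Periodic.lift (f := fun x : ℝ => ((f.F x : ℝ) : 𝕊)) (fun x => by
    show ((f.F (x + 1) : ℝ) : 𝕊) = ((f.F x : ℝ) : 𝕊)
    rw [f.map_add_one]
    exact AddCircle.coe_add_period 1 (f.F x))

/-- The `n`-th iterate (`n : ℤ`) of the induced self-map of the circle. -/
def mapZ (n : ℤ) : 𝕊 → 𝕊 :=
  Function.Periodic.lift (f := fun x : ℝ => ((f.iterZ n x : ℝ) : 𝕊)) (fun x => by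
    show ((f.iterZ n (x + 1) : ℝ) : 𝕊) = ((f.iterZ n x : ℝ) : 𝕊)
    rw [f.iterZ_map_add_one]
    exact AddCircle.coe_add_period 1 (f.iterZ n x))

/-- The derivative `Df`, as a function on the circle. -/
def Df : 𝕊 → ℝ := (periodic_deriv_of_shift f.map_add_one).lift

/-- The derivative `D(fⁿ)` of the `n`-th iterate (`n : ℕ`), as a function on the circle. -/
def DfIter (n : ℕ) : 𝕊 → ℝ :=
  (periodic_deriv_of_shift (iterate_map_add_one f.map_add_one n)).lift

/-- The derivative `D(fⁿ)` of the `n`-th iterate (`n : ℤ`), as a function on the circle. -/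
def DfZ (n : ℤ) : 𝕊 → ℝ := (periodic_deriv_of_shift (f.iterZ_map_add_one n)).lift

/-- The lift, as a degree one monotone map of the real line. -/
def deg1 : CircleDeg1Lift :=
  ⟨⟨f.F, (strictMono_of_deriv_pos f.deriv_pos).monotone⟩, f.map_add_one⟩

/-- The rotation number of `f` (the translation number of the given lift). -/
def rot : ℝ := f.deg1.translationNumber

end C1Diffeo

/-- The lift to `ℝ` of a function on the circle. -/
def lft (u : 𝕊 → ℝ) : ℝ → ℝ := fun x => u ↑x

lemma lft_periodic (u : 𝕊 → ℝ) : Function.Periodic (lft u) 1 := fun x => by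
  simp only [lft]
  rw [AddCircle.coe_add_period]

/-- A function on the circle is `C¹` if its lift to `ℝ` is `C¹`. -/
def IsC1 (u : 𝕊 → ℝ) : Prop := ContDiff ℝ 1 (lft u)

/-- The derivative of a function on the circle (the descent of the derivative
of its lift). -/
def derivS (u : 𝕊 → ℝ) : 𝕊 → ℝ := ((lft_periodic u).deriv').lift

/-- The `C¹` norm of a function on the circle. -/
def c1Norm (u : 𝕊 → ℝ) : ℝ := (⨆ x : 𝕊, |u x|) + ⨆ x : 𝕊, |derivS u x|

/-- The space of `C¹` real functions on the circle, as a subspace of all functions. -/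
def C1Sub : Submodule ℝ (𝕊 → ℝ) where
  carrier := {u | IsC1 u}
  add_mem' := fun hu hv => by
    simp only [Set.mem_setOf_eq, IsC1] at *
    exact hu.add hv
  zero_mem' := by
    simp only [Set.mem_setOf_eq, IsC1]
    exact contDiff_const
  smul_mem' := fun c u hu => by
    simp only [Set.mem_setOf_eq, IsC1] at *
    exact hu.const_smul c

/-- A (continuous) `1`-distribution on the circle: a linear functional on the space of `C¹`
functions which is bounded with respect to the `C¹` norm. -/
def IsDistribution (L : C1Sub →ₗ[ℝ] ℝ) : Prop :=
  ∃ C : ℝ, ∀ u : C1Sub, |L u| ≤ C * c1Norm (u : 𝕊 → ℝ)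

/-- Invariance of a `1`-distribution under a circle diffeomorphism: `L (u ∘ f) = L u`. -/
def InvariantUnder (f : C1Diffeo) (L : C1Sub →ₗ[ℝ] ℝ) : Prop :=
  ∀ u v : C1Sub, (∀ x, (v : 𝕊 → ℝ) x = (u : 𝕊 → ℝ) (f.toCircle x)) → L v = L u

/-- `K` is a minimal invariant Cantor set for the circle diffeomorphism `f`: a nonempty
perfect totally disconnected invariant set in which every (full) orbit is dense. -/
def IsMinimalInvariantCantor (f : C1Diffeo) (K : Set 𝕊) : Prop :=
  K.Nonempty ∧ Perfect K ∧ IsTotallyDisconnected K ∧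
    f.toCircle '' K = K ∧
    ∀ x ∈ K, closure (Set.range fun n : ℤ => f.mapZ n x) = K

/-- The total mass `S = Σ_{n ∈ ℤ} D(fⁿ)(x₀)` of the derivatives along the orbit of `x₀`. -/
def orbitSum (f : C1Diffeo) (x₀ : 𝕊) : ℝ := ∑' n : ℤ, f.DfZ n x₀

/-- The atomic measure `ν = S⁻¹ Σ_{n ∈ ℤ} D(fⁿ)(x₀) · δ_{fⁿ(x₀)}` on the circle. -/
def orbitMeasure (f : C1Diffeo) (x₀ : 𝕊) : Measure 𝕊 :=
  (ENNReal.ofReal (orbitSum f x₀))⁻¹ •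
    Measure.sum fun n : ℤ => ENNReal.ofReal (f.DfZ n x₀) • Measure.dirac (f.mapZ n x₀)

lemma derivS_coe (u : 𝕊 → ℝ) (x : ℝ) : derivS u (x : 𝕊) = deriv (lft u) x :=
  (lft_periodic u).deriv'.lift_coe x

lemma IsC1.differentiableAt {u : 𝕊 → ℝ} (hu : IsC1 u) (x : ℝ) :
    DifferentiableAt ℝ (lft u) x :=
  ContDiff.differentiable hu one_ne_zero x

lemma IsC1.continuous_derivS {u : 𝕊 → ℝ} (hu : IsC1 u) : Continuous (derivS u) := by
  rw [(QuotientAddGroup.isQuotientMap_mk (N := AddSubgroup.zmultiples (1 : ℝ))).continuous_iff]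
  have h : Continuous (deriv (lft u)) := ContDiff.continuous_deriv hu le_rfl
  exact h.congr fun x => (derivS_coe u x).symm

lemma IsC1.integrable_derivS {u : 𝕊 → ℝ} (hu : IsC1 u) (ν : Measure 𝕊)
    [IsProbabilityMeasure ν] : Integrable (derivS u) ν :=
  hu.continuous_derivS.integrable_of_hasCompactSupport (HasCompactSupport.of_compactSpace _)

lemma IsC1.derivS_add {u v : 𝕊 → ℝ} (hu : IsC1 u) (hv : IsC1 v) (x : 𝕊) :
    derivS (u + v) x = derivS u x + derivS v x := by
  induction x using QuotientAddGroup.induction_on with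
  | H x =>
    erw [derivS_coe, derivS_coe, derivS_coe]
    exact deriv_add (hu.differentiableAt x) (hv.differentiableAt x)

lemma IsC1.derivS_smul {u : 𝕊 → ℝ} (hu : IsC1 u) (c : ℝ) (x : 𝕊) :
    derivS (c • u) x = c * derivS u x := by
  induction x using QuotientAddGroup.induction_on with
  | H x =>
    erw [derivS_coe, derivS_coe]
    exact deriv_const_smul c (hu.differentiableAt x)

/-- Chain rule on the circle: `(u ∘ f)' = (u' ∘ f) · Df`. -/
lemma IsC1.derivS_comp {u v : 𝕊 → ℝ} (hu : IsC1 u) (f : C1Diffeo)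
    (h : ∀ x, v x = u (f.toCircle x)) (x : 𝕊) :
    derivS v x = derivS u (f.toCircle x) * f.Df x := by
  induction x using QuotientAddGroup.induction_on with
  | H x =>
    have hv : lft v = lft u ∘ f.F := funext fun y => h y
    have h1 : f.toCircle (x : 𝕊) = ((f.F x : ℝ) : 𝕊) := rfl
    have h2 : f.Df (x : 𝕊) = deriv f.F x := rfl
    change derivS v (x : 𝕊) = derivS u (f.toCircle (x : 𝕊)) * f.Df (x : 𝕊)
    rw [h1, h2, derivS_coe, derivS_coe, hv]
    exact deriv_comp x (hu.differentiableAt _) (f.contDiff.differentiable one_ne_zero x)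

/-- The `C⁰` norm of the derivative dominates its mean against a probability measure. -/
lemma IsC1.abs_integral_derivS_le {u : 𝕊 → ℝ} (hu : IsC1 u) (ν : Measure 𝕊)
    [IsProbabilityMeasure ν] : |∫ x, derivS u x ∂ν| ≤ c1Norm u := by
  -- Boundedness keeps the supremum in `c1Norm` from taking its junk value.
  have hb : BddAbove (Set.range fun x => |derivS u x|) :=
    (isCompact_range hu.continuous_derivS.abs).bddAbove
  have h1 : ‖∫ x, derivS u x ∂ν‖ ≤ (⨆ x : 𝕊, |derivS u x|) * ν.real Set.univ :=
    norm_integral_le_of_norm_le_const (ae_of_all _ fun x => le_ciSup hb x)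
  have h0 : 0 ≤ ⨆ x : 𝕊, |u x| := Real.iSup_nonneg fun x => abs_nonneg _
  rw [Real.norm_eq_abs, probReal_univ, mul_one] at h1
  unfold c1Norm
  linarith

/-- If `ν` is a 1-automorphic probability measure for `f`, then `L(u) := ∫ u' dν` is an
`f`-invariant 1-distribution. -/
theorem automorphic_measure_gives_invariant_distribution
    (f : C1Diffeo) (ν : Measure 𝕊) [IsProbabilityMeasure ν]
    (hauto : ∀ φ : 𝕊 → ℝ, Continuous φ →
      ∫ x, φ x ∂ν = ∫ x, φ (f.toCircle x) * f.Df x ∂ν) :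
    ∃ L : C1Sub →ₗ[ℝ] ℝ,
      (∀ u : C1Sub, L u = ∫ x, derivS (u : 𝕊 → ℝ) x ∂ν) ∧
      IsDistribution L ∧ InvariantUnder f L := by
  refine ⟨{ toFun := fun u => ∫ x, derivS (u : 𝕊 → ℝ) x ∂ν
            map_add' := fun u v => ?_
            map_smul' := fun c u => ?_ }, fun u => rfl, ⟨1, fun u => ?_⟩, fun u v h => ?_⟩
  · have hu : IsC1 (u : 𝕊 → ℝ) := u.2
    have hv : IsC1 (v : 𝕊 → ℝ) := v.2
    rw [← integral_add (hu.integrable_derivS ν) (hv.integrable_derivS ν)]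
    exact integral_congr_ae (ae_of_all _ (hu.derivS_add hv))
  · have hu : IsC1 (u : 𝕊 → ℝ) := u.2
    rw [RingHom.id_apply, smul_eq_mul, ← integral_const_mul]
    exact integral_congr_ae (ae_of_all _ (hu.derivS_smul c))
  · rw [one_mul]
    exact IsC1.abs_integral_derivS_le u.2 ν
  · have hu : IsC1 (u : 𝕊 → ℝ) := u.2
    exact (integral_congr_ae (ae_of_all _ (hu.derivS_comp f h))).trans
      (hauto _ hu.continuous_derivS).symm
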